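/- Let V be a finite set of variable indices with finite domains Dom_i (i ∈ V), and let I be a finite index set. For each α ∈ I let S_α ⊆ V with |S_α| ≥ 2, let M_α ⊆ Π_{i∈S_α} Dom_i be a matching, and fix ℓ_α ∈ S_α. For i ∈ S_α∖{ℓ_α} define W^α_i = Dom_i ∖ π_i(M_α) and M_α^{(j)} = π_{{ℓ_α,j}}(M_α) ⊆ Dom_{ℓ_α} × Dom_j for j ∈ S_α∖{ℓ_α}. Then for every x ∈ Π_{i∈V} Dom_i, the conjunction ∀ α ∈ I, x|_{S_α} ∉ M_α holds if and only if there exists t ∈ Π_{α∈I} S_α such that: (i) for every α with t_α ≠ ℓ_α, x_{t_α} ∈ W^α_{t_α}; and (ii) for every α with t_α = ℓ_α, there exists y : S_α∖{ℓ_α} → Dom_{ℓ_α} with (y_j, x_j) ∈ M_α^{(j)} for all j ∈ S_α∖{ℓ_α} and ¬(∀ j ∈ S_α∖{ℓ_α}, y_j = x_{ℓ_α}). In particular, the conjunction of negated matchings is equivalent to a disjunction of Π_{α∈I} |S_α| such positive formulas; consequently, if each negated relation R_S of arity |S| and degree at most d_S is decomposed into at most |S|(d_S−1)+1 matchings, the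 number of disjuncts is at most Π_S |S|^{|S|(d_S−1)+1}. -/

import Mathlib

/-- A relation `M ⊆ Π_{i∈S} Dom i` is a matching if any two of its tuples are
either equal or differ in every coordinate. -/
def IsMatching {S : Type*} {Dom : S → Type*} (M : Set ((i : S) → Dom i)) : Prop :=
  ∀ x ∈ M, ∀ y ∈ M, x = y ∨ ∀ i, x i ≠ y i

/-!
In a matching `M`, a tuple is determined by any one of its coordinates. Hence, if every `x j` with
`j ≠ ℓ` is the `j`-th entry of a tuple of `M`, that tuple is unique. Let `y j` be its entry at `ℓ`.
Then `x ∈ M` exactly when every `y j` equals `x ℓ`: the tuples of `M` through the pairs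
`(x ℓ, x j)` agree at `ℓ`, so they are one tuple, namely `x`. Negating gives a disjunction over
the coordinates of `M`, and a conjunction of such disjunctions becomes a single disjunction over
choice functions `t`.
-/

section SingleMatching

variable {S : Type*} {Dom : S → Type*}

/-- The set `W_i = Dom i ∖ π_i(M)` of values that no tuple of `M` takes at the coordinate `i`. -/
def uncoveredValues (M : Set ((i : S) → Dom i)) (i : S) : Set (Dom i) :=
  {a | ∀ m ∈ M, m i ≠ a}

/-- The projection `M^{(j)} = π_{{ℓ, j}}(M)`, as a set of ordered pairs whose first component is
the coordinate `ℓ`. -/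
def pairProjection (M : Set ((i : S) → Dom i)) (ℓ j : S) : Set (Dom ℓ × Dom j) :=
  {p | ∃ m ∈ M, m ℓ = p.1 ∧ m j = p.2}

/-- The positive formula attached to the coordinate `ℓ`: the values `x j`, `j ≠ ℓ`, have partners
`y j` at `ℓ` that are not all equal to `x ℓ`. The family `y` is indexed by all of `S`, but its
value at `ℓ` is irrelevant. -/
def HasDeviatingPartners (M : Set ((i : S) → Dom i)) (ℓ : S) (x : (i : S) → Dom i) : Prop :=
  ∃ y : S → Dom ℓ,
    (∀ j, j ≠ ℓ → (y j, x j) ∈ pairProjection M ℓ j) ∧ ¬ ∀ j, j ≠ ℓ → y j = x ℓ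

/-- The disjunct attached to the coordinate `i` in the positive formula equivalent to `x ∉ M`. The
two implications encode a case distinction on `i = ℓ`. -/
def SatisfiesDisjunct (M : Set ((i : S) → Dom i)) (ℓ : S) (x : (i : S) → Dom i) (i : S) : Prop :=
  (i ≠ ℓ → x i ∈ uncoveredValues M i) ∧ (i = ℓ → HasDeviatingPartners M ℓ x)

variable {M : Set ((i : S) → Dom i)} {x y : (i : S) → Dom i}

theorem notMem_of_mem_uncoveredValues {i : S} (hi : x i ∈ uncoveredValues M i) : x ∉ M :=
  fun hx => hi x hx rfl

theorem exists_satisfiesDisjunct_iff {ℓ : S} :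
    (∃ i, SatisfiesDisjunct M ℓ x i) ↔
      (∃ i, i ≠ ℓ ∧ x i ∈ uncoveredValues M i) ∨ HasDeviatingPartners M ℓ x := by
  constructor
  · rintro ⟨i, huncovered, hdeviating⟩
    by_cases hi : i = ℓ
    · exact .inr (hdeviating hi)
    · exact .inl ⟨i, hi, huncovered hi⟩
  · rintro (⟨i, hi, huncovered⟩ | hdeviating)
    · exact ⟨i, fun _ => huncovered, fun h => absurd h hi⟩
    · exact ⟨ℓ, fun h => absurd rfl h, fun _ => hdeviating⟩

theorem exists_partners_of_forall_notMem_uncoveredValues {ℓ : S}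
    (hcovered : ∀ j, j ≠ ℓ → x j ∉ uncoveredValues M j) :
    ∃ y : S → Dom ℓ, ∀ j, j ≠ ℓ → (y j, x j) ∈ pairProjection M ℓ j := by
  have hpartner (j : S) : ∃ a : Dom ℓ, j ≠ ℓ → (a, x j) ∈ pairProjection M ℓ j := by
    by_cases hj : j = ℓ
    · exact ⟨x ℓ, fun h => absurd hj h⟩
    · obtain ⟨m, hm, hmx⟩ : ∃ m ∈ M, m j = x j := by
        simpa [uncoveredValues] using hcovered j hj
      exact ⟨m ℓ, fun _ => ⟨m, hm, rfl, hmx⟩⟩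
  exact Classical.skolem.1 hpartner

namespace IsMatching

theorem eq_of_apply_eq (hM : IsMatching M) (hx : x ∈ M) (hy : y ∈ M) {i : S} (h : x i = y i) :
    x = y :=
  (hM x hx y hy).resolve_right fun hne => hne i h

theorem eq_of_mem_pairProjection (hM : IsMatching M) (hx : x ∈ M) {ℓ j : S} {a : Dom ℓ}
    (ha : (a, x j) ∈ pairProjection M ℓ j) : a = x ℓ := by
  obtain ⟨m, hm, rfl, hmx⟩ := ha
  rw [hM.eq_of_apply_eq hm hx hmx]

theorem mem_of_forall_mem_pairProjection [Nontrivial S] (hM : IsMatching M) {ℓ : S}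
    (h : ∀ j, j ≠ ℓ → (x ℓ, x j) ∈ pairProjection M ℓ j) : x ∈ M := by
  obtain ⟨k, hk⟩ := exists_ne ℓ
  obtain ⟨m, hm, hmℓ, -⟩ := h k hk
  have hmx : m = x := by
    funext j
    by_cases hj : j = ℓ
    · rwa [hj]
    · obtain ⟨n, hn, hnℓ, hnj⟩ := h j hj
      rwa [hM.eq_of_apply_eq hm hn (hmℓ.trans hnℓ.symm)]
  rwa [← hmx]

theorem notMem_of_hasDeviatingPartners (hM : IsMatching M) {ℓ : S}
    (h : HasDeviatingPartners M ℓ x) : x ∉ M := by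
  obtain ⟨y, hy, hdeviates⟩ := h
  exact fun hx => hdeviates fun j hj => hM.eq_of_mem_pairProjection hx (hy j hj)

theorem hasDeviatingPartners_of_notMem [Nontrivial S] (hM : IsMatching M) {ℓ : S} (hx : x ∉ M)
    (hcovered : ∀ j, j ≠ ℓ → x j ∉ uncoveredValues M j) : HasDeviatingPartners M ℓ x := by
  obtain ⟨y, hy⟩ := exists_partners_of_forall_notMem_uncoveredValues hcovered
  refine ⟨y, hy, fun hyx => hx (hM.mem_of_forall_mem_pairProjection (ℓ := ℓ) fun j hj => ?_)⟩
  rw [← hyx j hj]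
  exact hy j hj

theorem notMem_iff_exists_satisfiesDisjunct [Nontrivial S] (hM : IsMatching M) (ℓ : S) :
    x ∉ M ↔ ∃ i, SatisfiesDisjunct M ℓ x i := by
  rw [exists_satisfiesDisjunct_iff]
  constructor
  · intro hx
    by_cases huncovered : ∃ i, i ≠ ℓ ∧ x i ∈ uncoveredValues M i
    · exact .inl huncovered
    · exact .inr (hM.hasDeviatingPartners_of_notMem hx fun j hj h => huncovered ⟨j, hj, h⟩)
  · rintro (⟨i, -, huncovered⟩ | hdeviating)
    · exact notMem_of_mem_uncoveredValues huncovered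
    · exact hM.notMem_of_hasDeviatingPartners hdeviating

end IsMatching

end SingleMatching

theorem untangle_conjunction_of_negated_matchings_general
    {V : Type*} {Dom : V → Type*} {I : Type*}
    (S : I → Set V) (hS : ∀ α, (S α).Nontrivial)
    (M : (α : I) → Set ((i : S α) → Dom i))
    (hM : ∀ α, IsMatching (M α))
    (ℓ : (α : I) → S α) (x : (v : V) → Dom v) :
    (∀ α, (S α).domRestrict x ∉ M α) ↔
      ∃ t : (α : I) → S α, ∀ α, SatisfiesDisjunct (M α) (ℓ α) ((S α).domRestrict x) (t α) := by
  have hnontrivial (α : I) : Nontrivial (S α) := (hS α).coe_sort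
  rw [← Classical.skolem]
  exact forall_congr' fun α => (hM α).notMem_iff_exists_satisfiesDisjunct (ℓ α)

/-- Untangling a conjunction of negated matchings into a disjunction of positive
formulas.  For each `α ∈ I`, `Mα α` is a matching on the coordinates `Sα α ⊆ V`
(with `|Sα α| ≥ 2`) and `ℓ α ∈ Sα α` is fixed.  Then `x` avoids all the matchings
iff there is a choice `t ∈ Π_α Sα α` such that for each `α`: if `t α ≠ ℓ α` then
`x (t α)` lies in `W^α_{t α} = Dom ∖ π_{t α}(Mα α)`, and if `t α = ℓ α` then there
is `y : Sα α ∖ {ℓ α} → Dom (ℓ α)` with `(y j, x j) ∈ π_{ℓ α, j}(Mα α)` for all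
`j ≠ ℓ α` and not all `y j` equal to `x (ℓ α)`.  The disjunction ranges over the
`Π_α |Sα α|` choices of `t`. -/
theorem untangle_conjunction_of_negated_matchings
    {V : Type*} [Fintype V] [DecidableEq V] {Dom : V → Type*}
    {I : Type*} [Fintype I] [DecidableEq I]
    (Sα : I → Finset V) (hcard : ∀ α, 2 ≤ (Sα α).card)
    (Mα : (α : I) → Set ((i : {i // i ∈ Sα α}) → Dom i.1))
    (hM : ∀ α, IsMatching (Mα α))
    (ℓ : (α : I) → {i // i ∈ Sα α}) :
    (∀ x : (v : V) → Dom v,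
      (∀ α : I, (fun i : {i // i ∈ Sα α} => x i.1) ∉ Mα α) ↔
      (∃ t : (α : I) → {i // i ∈ Sα α},
        ∀ α : I,
          (t α ≠ ℓ α → ∀ m ∈ Mα α, m (t α) ≠ x (t α).1) ∧
          (t α = ℓ α →
            ∃ y : {i // i ∈ Sα α} → Dom (ℓ α).1,
              (∀ j : {i // i ∈ Sα α}, j ≠ ℓ α →
                ∃ m ∈ Mα α, m (ℓ α) = y j ∧ m j = x j.1) ∧
              ¬ (∀ j : {i // i ∈ Sα α}, j ≠ ℓ α → y j = x (ℓ α).1)))) ∧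
    Fintype.card ((α : I) → {i // i ∈ Sα α}) = ∏ α : I, (Sα α).card := by
  exact ⟨untangle_conjunction_of_negated_matchings_general (fun α => (Sα α : Set V))
    (fun α => Finset.one_lt_card_iff_nontrivial.1 (hcard α)) Mα hM ℓ, by simp⟩
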